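/- Let X be a normed linear space and let A be a nonempty bounded subset of X that is uniquely remotal. If Far(A) is contained in the derived set A' of A, then D(x, A) = D(x, A') for every x ∈ X. -/

import Mathlib

open Filter Topology

/-- The farthest distance of `x` from the set `A`: `D(x,A) = sup_{a ∈ A} ‖x - a‖`. -/
noncomputable def farDist {X : Type*} [NormedAddCommGroup X] (x : X) (A : Set X) : ℝ :=
  sSup ((fun a => ‖x - a‖) '' A)

/-- `F(x,A) = {a ∈ A : ‖x - a‖ = D(x,A)}`, the farthest points of `A` from `x`. -/
def farPoints {X : Type*} [NormedAddCommGroup X] (x : X) (A : Set X) : Set X :=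
  {a ∈ A | ‖x - a‖ = farDist x A}

/-- `A` is remotal if `F(x,A)` is nonempty for every `x`. -/
def Remotal {X : Type*} [NormedAddCommGroup X] (A : Set X) : Prop :=
  ∀ x : X, (farPoints x A).Nonempty

/-- `A` is uniquely remotal if `F(x,A)` is a singleton for every `x`. -/
def UniquelyRemotal {X : Type*} [NormedAddCommGroup X] (A : Set X) : Prop :=
  ∀ x : X, ∃ a : X, farPoints x A = {a}

/-- A sequence in `S` is maximizing if `‖x - a n‖ → D(x,S)` for some `x ∈ X`. -/
def MaximizingSeq {X : Type*} [NormedAddCommGroup X] (S : Set X) (a : ℕ → X) : Prop :=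
  (∀ n, a n ∈ S) ∧ ∃ x : X, Tendsto (fun n => ‖x - a n‖) atTop (𝓝 (farDist x S))

/-- `S` is M-compact if every maximizing sequence in `S` has a subsequence converging in `X`. -/
def MCompact {X : Type*} [NormedAddCommGroup X] (S : Set X) : Prop :=
  ∀ a : ℕ → X, MaximizingSeq S a →
    ∃ (φ : ℕ → ℕ) (l : X), StrictMono φ ∧ Tendsto (a ∘ φ) atTop (𝓝 l)

/-- `Far(A) = {a ∈ A : a ∈ F(x,A) for some x ∈ X}`. -/
def farSet {X : Type*} [NormedAddCommGroup X] (A : Set X) : Set X :=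
  {a : X | ∃ x : X, a ∈ farPoints x A}

-- We use Mathlib's `derivedSet A = {x | AccPt x (𝓟 A)}` for the set of limit points.

theorem bddAbove_image_norm_sub {E : Type*} [SeminormedAddCommGroup E] {A : Set E}
    (hbd : Bornology.IsBounded A) (x : E) :
    BddAbove ((fun a => ‖x - a‖) '' A) := by
  simpa only [dist_eq_norm] using ((LipschitzWith.dist_right x).isBounded_image hbd).bddAbove

section FarthestDistance

variable {X : Type*} [NormedAddCommGroup X] {A B : Set X} {a x : X}

theorem norm_sub_le_farDist (hbd : Bornology.IsBounded A) (x : X) (ha : a ∈ A) :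
    ‖x - a‖ ≤ farDist x A :=
  le_csSup (bddAbove_image_norm_sub hbd x) (Set.mem_image_of_mem _ ha)

theorem norm_sub_le_farDist_of_mem_closure (hbd : Bornology.IsBounded A) (x : X)
    (ha : a ∈ closure A) : ‖x - a‖ ≤ farDist x A :=
  have hclosed : IsClosed {b : X | ‖x - b‖ ≤ farDist x A} :=
    isClosed_le (by fun_prop) continuous_const
  closure_minimal (fun _ hb => norm_sub_le_farDist hbd x hb) hclosed ha

theorem farDist_eq_of_mem_farPoints_of_subset_closure (hbd : Bornology.IsBounded A)
    (hBA : B ⊆ closure A) (ha : a ∈ farPoints x A) (haB : a ∈ B) :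
    farDist x A = farDist x B := by
  have hgreatest : IsGreatest ((fun b => ‖x - b‖) '' B) (farDist x A) := by
    refine ⟨⟨a, haB, ha.2⟩, ?_⟩
    rintro _ ⟨b, hb, rfl⟩
    exact norm_sub_le_farDist_of_mem_closure hbd x (hBA hb)
  exact hgreatest.csSup_eq.symm

theorem UniquelyRemotal.remotal (hA : UniquelyRemotal A) : Remotal A := fun x =>
  let ⟨a, ha⟩ := hA x
  ha ▸ Set.singleton_nonempty a

theorem stmt_8_general (hbd : Bornology.IsBounded A) (hrem : Remotal A)
    (hfar : farSet A ⊆ derivedSet A) (x : X) : farDist x A = farDist x (derivedSet A) := by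
  obtain ⟨a, ha⟩ := hrem x
  have ha_lim : a ∈ derivedSet A := hfar ⟨x, ha⟩
  exact farDist_eq_of_mem_farPoints_of_subset_closure hbd (derivedSet_subset_closure A) ha ha_lim

end FarthestDistance

theorem stmt_8 {X : Type*} [NormedAddCommGroup X] [NormedSpace ℝ X]
    (A : Set X) (hne : A.Nonempty) (hbd : Bornology.IsBounded A)
    (hur : UniquelyRemotal A) (hfar : farSet A ⊆ derivedSet A) :
    ∀ x : X, farDist x A = farDist x (derivedSet A) := by
  exact stmt_8_general hbd hur.remotal hfar
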